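/- arXiv:0712.0469 — 2 statements merged into one kernel-verified Lean document; each statement's English description precedes it below -/
import Mathlib

section
/- Let C be the n×n matrix of all ones with weight function g_T(x) = e^{x/T}, and define T*(n) = sup_{α>1} (1 − 1/α)/ln((α−1)·n + 1). If n > 2, then the map u_T has a unique fixed point, namely the uniform vector (1/n, …, 1/n), if and only if T > T*(n). If n = 2, then u_T has a unique fixed point, namely (1/2, 1/2), if and only if T ≥ T*(2) = 1/2. -/
open Set

/-- For the complete graph (the matrix of all ones) with weight `g_T(x) = e^{x/T}`,
the unique invariant measure of `M_T(x)` is `u_T(x)_i = e^{x_i/T} / Σ_k e^{x_k/T}`. -/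
noncomputable def uT (n : ℕ) (T : ℝ) (x : Fin n → ℝ) : Fin n → ℝ :=
  fun i => Real.exp (x i / T) / ∑ k, Real.exp (x k / T)

/-- The critical temperature of the complete graph on `n` nodes:
`T*(n) = sup_{α>1} (1 − 1/α)/ln((α−1)·n + 1)`. -/
noncomputable def Tstar (n : ℕ) : ℝ :=
  sSup {t : ℝ | ∃ α : ℝ, 1 < α ∧ t = (1 - 1/α) / Real.log ((α - 1) * n + 1)}

/-- Denominator `D(s) = log (1 + n s) / s`, continuously extended to `s = 0`. -/
noncomputable def auxD (n : ℕ) : ℝ → ℝ := dslope (fun s : ℝ => Real.log (1 + n * s)) 0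

/-- The function under the sup in `Tstar`, at `α = 1 + s`, extended to `s = 0`. -/
noncomputable def auxG (n : ℕ) (s : ℝ) : ℝ := 1 / ((1 + s) * auxD n s)

lemma auxD_zero (n : ℕ) : auxD n 0 = n := by
  have h : HasDerivAt (fun s : ℝ => Real.log (1 + n * s)) ((n : ℝ) * 1 / (1 + n * 0)) 0 :=
    HasDerivAt.log (((hasDerivAt_id (0 : ℝ)).const_mul (n : ℝ)).const_add 1) (by simp)
  rw [auxD, dslope_same, h.deriv]
  simp

lemma auxD_pos_eq (n : ℕ) {s : ℝ} (hs : 0 < s) : auxD n s = Real.log (1 + n * s) / s := by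
  rw [auxD, dslope_of_ne _ hs.ne', slope_def_field]
  simp

lemma auxlog_pos {n : ℕ} (hn : 2 ≤ n) {s : ℝ} (hs : 0 < s) : 0 < Real.log (1 + n * s) := by
  have : (2 : ℝ) ≤ n := by exact_mod_cast hn
  apply Real.log_pos
  nlinarith

lemma auxD_pos {n : ℕ} (hn : 2 ≤ n) {s : ℝ} (hs : 0 ≤ s) : 0 < auxD n s := by
  rcases hs.eq_or_lt with rfl | hs
  · rw [auxD_zero]; positivity
  · rw [auxD_pos_eq n hs]; exact div_pos (auxlog_pos hn hs) hs

lemma auxD_cont (n : ℕ) : ContinuousOn (auxD n) (Ici 0) := by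
  intro s hs
  apply ContinuousAt.continuousWithinAt
  have hs : 0 ≤ s := hs
  have hd : DifferentiableAt ℝ (fun s : ℝ => Real.log (1 + n * s)) s := by
    apply DifferentiableAt.log
    · fun_prop
    · positivity
  rcases hs.eq_or_lt with rfl | hs
  · exact continuousAt_dslope_same.2 hd
  · exact (continuousAt_dslope_of_ne hs.ne').2 hd.continuousAt

lemma auxG_cont {n : ℕ} (hn : 2 ≤ n) : ContinuousOn (auxG n) (Ici 0) := by
  unfold auxG
  apply ContinuousOn.div continuousOn_const
  · exact ContinuousOn.mul (by fun_prop) (auxD_cont n)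
  · intro s hs
    have := auxD_pos hn hs
    have hs : 0 ≤ s := hs
    positivity

lemma auxG_zero (n : ℕ) : auxG n 0 = 1 / n := by simp [auxG, auxD_zero]

lemma auxG_pos_eq {n : ℕ} (hn : 2 ≤ n) {s : ℝ} (hs : 0 < s) :
    auxG n s = s / (1 + s) / Real.log (1 + n * s) := by
  have := auxlog_pos hn hs
  rw [auxG, auxD_pos_eq n hs]
  field_simp

lemma auxG_small {n : ℕ} (hn : 2 ≤ n) {T s : ℝ} (hT : 0 < T) (hs : Real.exp (1 / T) ≤ s) :
    auxG n s < T := by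
  have h2 : (2 : ℝ) ≤ n := by exact_mod_cast hn
  have hs0 : 0 < s := (Real.exp_pos _).trans_le hs
  have hl := auxlog_pos hn hs0
  rw [auxG_pos_eq hn hs0, div_lt_iff₀ hl]
  have h1 : 1 / T ≤ Real.log (1 + n * s) := by
    rw [Real.le_log_iff_exp_le (by positivity)]
    nlinarith
  have h3 : s / (1 + s) < 1 := by rw [div_lt_one (by positivity)]; linarith
  calc s / (1 + s) < 1 := h3
    _ = T * (1 / T) := by field_simp
    _ ≤ _ := by gcongr

lemma auxG_ivt {n : ℕ} (hn : 2 ≤ n) {T s₀ : ℝ} (hT : 0 < T) (hs : 0 ≤ s₀)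
    (h : T ≤ auxG n s₀) : ∃ s, s₀ ≤ s ∧ auxG n s = T := by
  have hle : s₀ ≤ max s₀ (Real.exp (1 / T)) := le_max_left _ _
  obtain ⟨s, hs1, hs2⟩ := intermediate_value_Icc' hle
    ((auxG_cont hn).mono (fun x hx => hs.trans hx.1))
    ⟨(auxG_small hn hT (le_max_right _ _)).le, h⟩
  exact ⟨s, hs1.1, hs2⟩

lemma Tstar_eq {n : ℕ} (hn : 2 ≤ n) : Tstar n = sSup (auxG n '' Ioi 0) := by
  unfold Tstar
  congr 1
  ext t
  constructor
  · rintro ⟨α, hα, rfl⟩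
    have hs : 0 < α - 1 := by linarith
    refine ⟨α - 1, hs, ?_⟩
    rw [auxG_pos_eq hn hs]
    congr 1
    · have : α ≠ 0 := by linarith
      rw [add_sub_cancel]; field_simp
    · ring_nf
  · rintro ⟨s, hs, rfl⟩
    have hs : 0 < s := hs
    refine ⟨1 + s, by linarith, ?_⟩
    rw [auxG_pos_eq hn hs]
    congr 1
    · field_simp; ring
    · ring_nf

/-- For `n > 2` the supremum is attained. -/
lemma auxG_max {n : ℕ} (hn : 2 < n) : ∃ s₀, 0 < s₀ ∧ ∀ s, 0 ≤ s → auxG n s ≤ auxG n s₀ := by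
  have h3 : (3 : ℝ) ≤ n := by exact_mod_cast hn
  have hn0 : (0 : ℝ) < 1 / n := by positivity
  obtain ⟨s₀, hs0, hmax⟩ := (isCompact_Icc (a := (0 : ℝ)) (b := Real.exp (1 / (1 / (n : ℝ))))).exists_isMaxOn
    ⟨0, by simp; positivity⟩ ((auxG_cont hn.le).mono (fun x hx => hx.1))
  have hz : auxG n 0 ≤ auxG n s₀ := hmax ⟨le_rfl, (Real.exp_pos _).le⟩
  have hall : ∀ s, 0 ≤ s → auxG n s ≤ auxG n s₀ := by
    intro s hs
    rcases le_total s (Real.exp (1 / (1 / (n : ℝ)))) with h | h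
    · exact hmax ⟨hs, h⟩
    · have := auxG_small hn.le hn0 h
      rw [auxG_zero] at hz
      linarith
  refine ⟨s₀, lt_of_le_of_ne hs0.1 ?_, hall⟩
  rintro rfl
  have h1 := hall (1 / n) hn0.le
  rw [auxG_zero, auxG_pos_eq hn.le hn0, div_le_iff₀ (auxlog_pos hn.le hn0)] at h1
  have e : (1 : ℝ) + n * (1 / n) = 2 := by field_simp; norm_num
  rw [e] at h1
  have h2 := Real.log_two_lt_d9
  have e2 : (1 : ℝ) / n / (1 + 1 / n) = 1 / n * (1 / (1 + 1 / n)) := by ring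
  rw [e2] at h1
  have h4 := le_of_mul_le_mul_left h1 hn0
  have h5 : (1 : ℝ) / n ≤ 1 / 3 := by gcongr
  have h6 : (1 : ℝ) / (1 + 1 / 3) ≤ 1 / (1 + 1 / n) := by gcongr
  norm_num at h6 h4 h2
  linarith

lemma auxG_two {s : ℝ} (hs : 0 < s) : auxG 2 s < 1 / 2 := by
  rw [auxG_pos_eq le_rfl hs, div_lt_iff₀ (auxlog_pos le_rfl hs)]
  have := Real.lt_log_one_add_of_pos (x := 2 * s) (by positivity)
  have e : 2 * (2 * s) / (2 * s + 2) = 2 * (s / (1 + s)) := by field_simp; ring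
  push_cast
  linarith

lemma Tstar_two : Tstar 2 = 1 / 2 := by
  rw [Tstar_eq le_rfl]
  apply csSup_eq_of_forall_le_of_forall_lt_exists_gt
  · exact ⟨_, 1, by simp, rfl⟩
  · rintro _ ⟨s, hs, rfl⟩
    exact (auxG_two hs).le
  · intro w hw
    obtain ⟨t, ht1, ht2⟩ := exists_between (max_lt hw (by norm_num : (0 : ℝ) < 1 / 2))
    have ht0 : 0 < t := (le_max_right _ _).trans_lt ht1
    obtain ⟨s, hs, he⟩ := auxG_ivt (n := 2) le_rfl ht0 le_rfl (by rw [auxG_zero]; exact_mod_cast ht2.le)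
    refine ⟨t, ⟨s, lt_of_le_of_ne hs ?_, he⟩, (le_max_left _ _).trans_lt ht1⟩
    rintro rfl
    rw [auxG_zero] at he
    push_cast at he
    linarith

lemma uniform_fixed {n : ℕ} (hn : 2 ≤ n) (T : ℝ) :
    uT n T (fun _ => (1 : ℝ) / n) = fun _ => (1 : ℝ) / n := by
  funext i
  have : (n : ℝ) ≠ 0 := by positivity
  simp only [uT, Finset.sum_const, Finset.card_univ, Fintype.card_fin, nsmul_eq_mul]
  have := Real.exp_pos ((1 : ℝ) / n / T)
  field_simp

/-- Existence of a nonuniform fixed point. -/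
lemma exists_nonuniform {n : ℕ} (hn : 2 ≤ n) {T s : ℝ} (hT : 0 < T) (hs : 0 < s)
    (h : auxG n s = T) :
    ∃ x ∈ stdSimplex ℝ (Fin n), uT n T x = x ∧ x ≠ fun _ => (1 : ℝ) / n := by
  obtain ⟨m, rfl⟩ : ∃ m, n = m + 1 := ⟨n - 1, by omega⟩
  have hm : 1 ≤ m := by omega
  set a : ℝ := 1 / (((m + 1 : ℕ) : ℝ) * (1 + s)) with ha
  set b : ℝ := a * (1 + ((m + 1 : ℕ) : ℝ) * s) with hb
  have ha0 : 0 < a := by positivity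
  have hb0 : 0 < b := by positivity
  have hbn : b + m * a = 1 := by
    rw [hb, ha]; push_cast; field_simp; ring
  have hlog := auxlog_pos hn hs
  have hexp : Real.exp (b / T) = Real.exp (a / T) * (1 + ((m + 1 : ℕ) : ℝ) * s) := by
    have e : b / T = a / T + Real.log (1 + ((m + 1 : ℕ) : ℝ) * s) := by
      have e1 : b - a = s / (1 + s) := by
        rw [hb, ha]; field_simp; ring
      have e2 : (b - a) / T = Real.log (1 + ((m + 1 : ℕ) : ℝ) * s) := by
        rw [e1, ← h, auxG_pos_eq hn hs]
        field_simp
      rw [← e2]; ring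
    rw [e, Real.exp_add, Real.exp_log (by positivity)]
  have hE := Real.exp_pos (a / T)
  have hZ : Real.exp (b / T) + m * Real.exp (a / T) = Real.exp (a / T) / a := by
    rw [hexp, ha]; push_cast; field_simp; ring
  refine ⟨Fin.cons b (fun _ => a), ⟨?_, ?_⟩, ?_, ?_⟩
  · intro i
    refine Fin.cases ?_ (fun j => ?_) i
    · simpa using hb0.le
    · simpa using ha0.le
  · simp [Fin.sum_univ_succ, hbn]
  · funext i
    refine Fin.cases ?_ (fun j => ?_) i
    · simp only [uT, Fin.sum_univ_succ, Fin.cons_zero, Fin.cons_succ, Finset.sum_const,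
        Finset.card_univ, Fintype.card_fin, nsmul_eq_mul]
      rw [hZ, hexp, hb]; field_simp
    · simp only [uT, Fin.sum_univ_succ, Fin.cons_zero, Fin.cons_succ, Finset.sum_const,
        Finset.card_univ, Fintype.card_fin, nsmul_eq_mul]
      rw [hZ]; field_simp
  · intro hx
    have h0 := congrFun hx (Fin.succ ⟨0, hm⟩)
    simp only [Fin.cons_succ] at h0
    rw [ha] at h0
    field_simp at h0
    linarith

lemma one_add_sum_le_prod_aux {ι : Type*} (S : Finset ι) (y : ι → ℝ) (hy : ∀ i, 0 ≤ y i) :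
    1 + ∑ i ∈ S, y i ≤ ∏ i ∈ S, (1 + y i) := by
  classical
  induction S using Finset.induction_on with
  | empty => simp
  | insert i S hi ih =>
    rw [Finset.sum_insert hi, Finset.prod_insert hi]
    have h0 : 0 ≤ ∑ i ∈ S, y i := Finset.sum_nonneg (fun i _ => hy i)
    nlinarith [hy i, mul_nonneg (hy i) h0]

/-- A nonuniform fixed point forces `T` to be at most a value of `auxG`. -/
lemma le_of_nonuniform {n : ℕ} (hn : 2 ≤ n) {T : ℝ} (hT : 0 < T) {x : Fin n → ℝ}
    (hx : x ∈ stdSimplex ℝ (Fin n)) (hfix : uT n T x = x) (hne : x ≠ fun _ => (1 : ℝ) / n) :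
    ∃ s, 0 < s ∧ T ≤ auxG n s := by
  haveI : Nonempty (Fin n) := ⟨⟨0, by omega⟩⟩
  have hn0 : (0 : ℝ) < n := by positivity
  have hsum := hx.2
  set Z := ∑ k, Real.exp (x k / T) with hZ
  have hZ0 : 0 < Z := Finset.sum_pos (fun i _ => Real.exp_pos _) Finset.univ_nonempty
  have hxi : ∀ i, x i = Real.exp (x i / T) / Z := fun i => (congrFun hfix i).symm
  have hpos : ∀ i, 0 < x i := fun i => by rw [hxi i]; exact div_pos (Real.exp_pos _) hZ0
  obtain ⟨j, hj⟩ := Finite.exists_min x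
  set a := x j with ha
  have ha0 : 0 < a := hpos j
  have hlogx : ∀ i, Real.log (x i) = x i / T - Real.log Z := fun i => by
    conv_lhs => rw [hxi i]
    rw [Real.log_div (Real.exp_pos _).ne' hZ0.ne', Real.log_exp]
  have hlt : n * a < 1 := by
    by_contra hcon
    push Not at hcon
    have hz : ∑ i, (x i - a) ≤ 0 := by
      rw [Finset.sum_sub_distrib, hsum]; simp; linarith
    have hz' : ∑ i, (x i - a) = 0 :=
      le_antisymm hz (Finset.sum_nonneg (fun i _ => sub_nonneg.2 (hj i)))
    have hall := (Finset.sum_eq_zero_iff_of_nonneg (fun i _ => sub_nonneg.2 (hj i))).1 hz'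
    have hna : (n : ℝ) * a = 1 := by
      rw [Finset.sum_sub_distrib, hsum] at hz'
      simp at hz'
      linarith
    apply hne
    funext i
    have := hall i (Finset.mem_univ i)
    rw [eq_div_iff hn0.ne']
    nlinarith
  have hs : 0 < 1 / (n * a) - 1 := by
    rw [sub_pos, lt_div_iff₀ (by positivity)]; linarith
  refine ⟨1 / (n * a) - 1, hs, ?_⟩
  rw [auxG_pos_eq hn hs, le_div_iff₀ (auxlog_pos hn hs)]
  have hy : ∀ i, 0 ≤ (x i - a) / a := fun i => div_nonneg (sub_nonneg.2 (hj i)) ha0.le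
  have hprod := one_add_sum_le_prod_aux Finset.univ (fun i => (x i - a) / a) hy
  have e1 : 1 + ∑ i, (x i - a) / a = 1 + n * (1 / (n * a) - 1) := by
    rw [← Finset.sum_div, Finset.sum_sub_distrib, hsum]
    simp
    field_simp
  rw [e1] at hprod
  have h1 : Real.log (1 + n * (1 / (n * a) - 1)) ≤ ∑ i, Real.log (1 + (x i - a) / a) := by
    rw [← Real.log_prod (fun i _ => by have := hy i; positivity)]
    exact Real.log_le_log (by positivity) hprod
  have h2 : ∑ i, Real.log (1 + (x i - a) / a) = (1 - n * a) / T := by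
    have : ∀ i, Real.log (1 + (x i - a) / a) = (x i - a) / T := fun i => by
      have e : 1 + (x i - a) / a = x i / a := by field_simp; ring
      rw [e, Real.log_div (hpos i).ne' ha0.ne', hlogx i, ha, hlogx j]
      ring
    simp only [this]
    rw [← Finset.sum_div, Finset.sum_sub_distrib, hsum]
    simp
  have e3 : (1 / (n * a) - 1) / (1 + (1 / (n * a) - 1)) = 1 - n * a := by
    field_simp; ring
  rw [e3]
  rw [h2, le_div_iff₀ hT] at h1
  linarith

/-- Uniqueness fails iff `T` is a lower bound of some / equals some value of `auxG`. -/
lemma unique_iff {n : ℕ} (hn : 2 ≤ n) {T : ℝ} (hT : 0 < T) :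
    (∀ x ∈ stdSimplex ℝ (Fin n), (uT n T x = x ↔ x = fun _ => (1 : ℝ) / n)) ↔
      ∀ s, 0 < s → auxG n s < T := by
  constructor
  · intro h s hs
    by_contra hcon
    push Not at hcon
    obtain ⟨s', hs', he⟩ := auxG_ivt hn hT hs.le hcon
    obtain ⟨x, hx, hf, hne⟩ := exists_nonuniform hn hT (hs.trans_le hs') he
    exact hne ((h x hx).1 hf)
  · intro h x hx
    constructor
    · intro hf
      by_contra hne
      obtain ⟨s, hs, hle⟩ := le_of_nonuniform hn hT hx hf hne
      exact absurd (h s hs) (not_lt.2 hle)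
    · rintro rfl
      exact uniform_fixed hn T

/-- For the complete graph on `n` nodes: if `n > 2`, the map `u_T` has the uniform
vector as its unique fixed point iff `T > T*(n)`; if `n = 2`, this holds iff
`T ≥ T*(2) = 1/2`. -/
theorem complete_graph_critical_temperature
    (n : ℕ) (hn : 2 ≤ n) (T : ℝ) (hT : 0 < T) :
    (2 < n →
      ((∀ x ∈ stdSimplex ℝ (Fin n), (uT n T x = x ↔ x = fun _ => (1 : ℝ) / n)) ↔
        Tstar n < T)) ∧
    (n = 2 →
      ((∀ x ∈ stdSimplex ℝ (Fin n), (uT n T x = x ↔ x = fun _ => (1 : ℝ) / n)) ↔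
        Tstar n ≤ T)) ∧
    (n = 2 → Tstar n = 1/2) := by
  refine ⟨fun h2 => ?_, ?_, ?_⟩
  · rw [unique_iff hn hT]
    obtain ⟨s₀, hs0, hmax⟩ := auxG_max h2
    have hT' : Tstar n = auxG n s₀ := by
      rw [Tstar_eq hn]
      apply IsGreatest.csSup_eq
      refine ⟨⟨s₀, hs0, rfl⟩, ?_⟩
      rintro _ ⟨s, hs, rfl⟩
      exact hmax s (le_of_lt hs)
    rw [hT']
    exact ⟨fun h => h s₀ hs0, fun h s hs => (hmax s hs.le).trans_lt h⟩
  · rintro rfl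
    rw [unique_iff hn hT, Tstar_two]
    constructor
    · intro h
      rw [← Tstar_two, Tstar_eq le_rfl]
      refine csSup_le (Set.Nonempty.image _ ⟨1, by simp⟩) ?_
      rintro _ ⟨s, hs, rfl⟩
      exact (h s hs).le
    · intro h s hs
      exact (auxG_two hs).trans_le h
  · rintro rfl
    exact Tstar_two
end

section
/- Define T*(n) = sup_{α>1} (1 − 1/α)/ln((α−1)·n + 1). For every n > 2, one has (1 − 1/ln n)/ln((ln n − 1)·n + 1) ≤ T*(n) < 1/ln(n−1). Consequently, T*(n)·ln n → 1 as n → ∞, i.e. T*(n) ~ 1/ln n. -/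
open Set Filter Topology

lemma Tstar_key (n : ℕ) (hn : 2 < n) (α : ℝ) (hα : 1 < α) :
    (1 - 1/α) / Real.log ((α - 1) * n + 1) ≤ 1 / (Real.log n + 1) := by
  have hn3 : (3:ℝ) ≤ n := by exact_mod_cast hn
  have hα0 : 0 < α := by linarith
  have hL : 0 < Real.log n := Real.log_pos (by linarith)
  have hi1 : 1/α < 1 := by rw [div_lt_one hα0]; exact hα
  have hi0 : 0 < 1/α := by positivity
  have hpos : 0 < (α - 1) * n := mul_pos (by linarith) (by linarith)
  have hlog : 0 < Real.log ((α - 1) * n + 1) := Real.log_pos (by linarith)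
  have hb := rpow_one_add_le_one_add_mul_self (s := (n:ℝ) - 1) (by linarith)
    (p := 1 - 1/α) (by linarith) (by linarith)
  rw [show 1 + ((n:ℝ) - 1) = n by ring] at hb
  have hb' := Real.log_le_log (Real.rpow_pos_of_pos (by linarith) _) hb
  rw [Real.log_rpow (by linarith)] at hb'
  have heq : (α - 1) * n + 1 = α * (1 + (1 - 1/α) * ((n:ℝ) - 1)) := by
    field_simp
    ring
  have hq : 0 < 1 + (1 - 1/α) * ((n:ℝ) - 1) := by
    have : 0 < (1 - 1/α) * ((n:ℝ) - 1) := mul_pos (by linarith) (by linarith)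
    linarith
  have h2 : 1 - 1/α ≤ Real.log α := by
    have := Real.one_sub_inv_le_log_of_pos hα0
    rwa [one_div]
  rw [div_le_div_iff₀ hlog (by linarith), heq, Real.log_mul hα0.ne' hq.ne']
  linarith

lemma Tstar_log_gt_one (n : ℕ) (hn : 2 < n) : 1 < Real.log n := by
  have hn3 : (3:ℝ) ≤ n := by exact_mod_cast hn
  rw [Real.lt_log_iff_exp_lt (by linarith)]
  linarith [Real.exp_one_lt_d9]

lemma Tstar_upper (n : ℕ) (hn : 2 < n) : Tstar n ≤ 1 / (Real.log n + 1) := by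
  apply csSup_le
  · exact ⟨_, 2, by norm_num, rfl⟩
  · rintro t ⟨α, hα, rfl⟩
    exact Tstar_key n hn α hα

lemma Tstar_lower (n : ℕ) (hn : 2 < n) :
    (1 - 1 / Real.log n) / Real.log ((Real.log n - 1) * n + 1) ≤ Tstar n := by
  apply le_csSup
  · refine ⟨1 / (Real.log n + 1), ?_⟩
    rintro t ⟨α, hα, rfl⟩
    exact Tstar_key n hn α hα
  · exact ⟨Real.log n, Tstar_log_gt_one n hn, rfl⟩

/-- Bounds on the critical temperature `T*(n)` of the complete graph, and the
asymptotics `T*(n) ~ 1/ln n` as `n → ∞`. -/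
theorem Tstar_bounds_and_asymptotics :
    (∀ n : ℕ, 2 < n →
      (1 - 1 / Real.log n) / Real.log ((Real.log n - 1) * n + 1) ≤ Tstar n ∧
      Tstar n < 1 / Real.log ((n : ℝ) - 1)) ∧
    Tendsto (fun n : ℕ => Tstar n * Real.log n) atTop (𝓝 1) := by
  refine ⟨fun n hn => ⟨Tstar_lower n hn, (Tstar_upper n hn).trans_lt ?_⟩, ?_⟩
  · have hn3 : (3:ℝ) ≤ n := by exact_mod_cast hn
    have h1 : 0 < Real.log ((n:ℝ) - 1) := Real.log_pos (by linarith)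
    have h2 : Real.log ((n:ℝ) - 1) ≤ Real.log n := Real.log_le_log (by linarith) (by linarith)
    exact one_div_lt_one_div_of_lt h1 (by linarith)
  · have hL : Tendsto (fun n : ℕ => Real.log n) atTop atTop :=
      Real.tendsto_log_atTop.comp tendsto_natCast_atTop_atTop
    have hx : Tendsto (fun x : ℝ => (1 - 1 / x) / (1 + Real.log x / x)) atTop (𝓝 1) := by
      have h1 : Tendsto (fun x : ℝ => Real.log x / x) atTop (𝓝 0) :=
        Real.isLittleO_log_id_atTop.tendsto_div_nhds_zero
      have h2 : Tendsto (fun x : ℝ => 1 / x) atTop (𝓝 0) := by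
        simpa using tendsto_inv_atTop_zero (𝕜 := ℝ)
      have := (h2.const_sub 1).div (h1.const_add 1) (by norm_num)
      rw [show ((1:ℝ) - 0) / (1 + 0) = 1 by norm_num] at this
      exact this
    refine tendsto_of_tendsto_of_tendsto_of_le_of_le' (hx.comp hL) tendsto_const_nhds ?_ ?_
    · filter_upwards [eventually_gt_atTop 2] with n hn
      have hn3 : (3:ℝ) ≤ n := by exact_mod_cast hn
      have h1 := Tstar_log_gt_one n hn
      have hl := Tstar_lower n hn
      simp only [Function.comp]
      set L := Real.log n with hLdef
      have hLp : 0 < L := by linarith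
      have hn0 : (0:ℝ) < n := by linarith
      have hp : 0 < (L - 1) * n := mul_pos (by linarith) (by linarith)
      have hlog : 0 < Real.log ((L - 1) * n + 1) := Real.log_pos (by linarith)
      have hle : Real.log ((L - 1) * n + 1) ≤ Real.log L + L := by
        have := Real.log_le_log (by linarith) (show (L - 1) * n + 1 ≤ L * n by linarith)
        rwa [Real.log_mul (by positivity) (by positivity)] at this
      have h0 : 0 ≤ 1 - 1 / L := by
        have : 1 / L ≤ 1 := by rw [div_le_one (by linarith)]; exact h1.le
        linarith
      calc (1 - 1 / L) / (1 + Real.log L / L) = (1 - 1 / L) / (Real.log L + L) * L := by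
            have : 1 + Real.log L / L = (Real.log L + L) / L := by field_simp; ring
            rw [this, div_div_eq_mul_div]; ring
        _ ≤ (1 - 1 / L) / Real.log ((L - 1) * n + 1) * L := by gcongr
        _ ≤ Tstar n * L := by gcongr
    · filter_upwards [eventually_gt_atTop 2] with n hn
      have h1 := Tstar_log_gt_one n hn
      calc Tstar n * Real.log n ≤ 1 / (Real.log n + 1) * Real.log n := by
            gcongr
            exact Tstar_upper n hn
        _ ≤ 1 := by
            rw [one_div_mul_eq_div, div_le_one (by linarith)]; linarith
end
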